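/- The semigroup UT₃(ℤ) of all upper triangular integer 3×3 matrices whose main-diagonal entries are 0s and/or 1s (under matrix multiplication) is nonfinitely based: there is no finite set Σ of semigroup identities holding in UT₃(ℤ) such that every semigroup identity holding in UT₃(ℤ) follows from Σ. -/

import Mathlib

/-!
For every length bound there is an identity of `UT₃(ℤ)` that does not follow from the identities
of `UT₃(ℤ)` within that bound. The argument has three ingredients.

*Isoterms* (`GapsNodup.isoterm`). Call a letter linear in `s` if it occurs once. Suppose every
factor of `s` made of non-linear letters has distinct letters. Then `s = t` holds in `UT₃(ℤ)` only
if `s` and `t` are the same word: suitable substitutions show that the identities of `UT₃(ℤ)`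
preserve the number of occurrences of each letter, the letters (with multiplicity) before the first
occurrence of a given letter, and the order of two letters that occur once each between two linear
letters.

*A long identity* (`holds_big`). The word `bigW f n` consists of rounds `0, …, 15`. Round `k` goes
through the pairs `{0, 1}, {2, 3}, …, {2n, 2n + 1}`; the first pair is swapped if `f k`, and the
orientations of the others repeat the four binary digits of `k`. The identity equates the word with
the first pair swapped in rounds `5, 11` and the word with it swapped in rounds `7, 9`. A swap adds
a commutator, which is strictly upper triangular. Terms with two commutators vanish. A term with
one commutator depends, up to a common constant, linearly on the entry `(1, 2)` of the code of the
preceding round and the entry `(2, 3)` of the code of its own round (`commutator_term`). These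
entries are sums of contributions that each depend on a single binary digit of the round, and the
rounds `5, 11` and `7, 9` (and the preceding ones, `4, 10` and `6, 8`) have the same digits in each
binary place, counted with multiplicity.

*No short repetitions* (`gapsNodup_of_instance`). In `bigW f n`, equal letters are at least
`2n + 1` positions apart, while a factor of length `24` occurs only once, because it reveals the
round. So if a substitution turns a word `s` with `24 * s.length ≤ 2n + 1` into a factor of
`bigW f n`, then non-linear letters of `s` have short images and `s` satisfies the isoterm
condition.

Given a finite set of identities of `UT₃(ℤ)`, take `n` large and let `T` be the quotient of the
free semigroup that collapses all words which are not factors of `bigW fU n`. Then `T` satisfies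
the given identities, since a side with an instance among those factors is an isoterm, but `T`
does not satisfy the long identity.
-/

/-- The subsemigroup `UT₃(ℤ)` of the multiplicative semigroup of real `3 × 3` matrices
consisting of the upper triangular matrices whose main-diagonal entries are 0s and/or 1s. -/
def UT3Z : Subsemigroup (Matrix (Fin 3) (Fin 3) ℤ) where
  carrier := {A | (∀ i j : Fin 3, (j : ℕ) < (i : ℕ) → A i j = 0) ∧
    ∀ i : Fin 3, A i i = 0 ∨ A i i = 1}
  mul_mem' := by
    rintro A B ⟨hA1, hA2⟩ ⟨hB1, hB2⟩
    constructor
    · intro i j hij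
      rw [Matrix.mul_apply]
      apply Finset.sum_eq_zero
      intro k _
      rcases lt_or_ge (k : ℕ) (i : ℕ) with h | h
      · rw [hA1 i k h, zero_mul]
      · rw [hB1 k j (lt_of_lt_of_le hij h), mul_zero]
    · intro i
      rw [Matrix.mul_apply, Finset.sum_eq_single i]
      · rcases hA2 i with h1 | h1 <;> rcases hB2 i with h2 | h2 <;>
          rw [h1, h2] <;> simp
      · intro k _ hk
        rcases lt_or_ge (k : ℕ) (i : ℕ) with h | h
        · rw [hA1 i k h, zero_mul]
        · have hik : (i : ℕ) < (k : ℕ) :=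
            lt_of_le_of_ne h (fun he => hk (Fin.val_injective he.symm))
          rw [hB1 k i hik, mul_zero]
      · intro h
        exact absurd (Finset.mem_univ i) h

/-- A semigroup `S` satisfies the semigroup identity `(u, v)` (a pair of elements of the
free semigroup on a countable alphabet) if every homomorphism to `S` equalizes `u` and `v`. -/
def SatisfiesId (S : Type*) [Semigroup S] (e : FreeSemigroup ℕ × FreeSemigroup ℕ) : Prop :=
  ∀ φ : FreeSemigroup ℕ →ₙ* S, φ e.1 = φ e.2

/-- The identity `e` follows from the system of identities `Sgm` if every semigroup
satisfying all identities of `Sgm` also satisfies `e`. -/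
def FollowsFrom (Sgm : Set (FreeSemigroup ℕ × FreeSemigroup ℕ))
    (e : FreeSemigroup ℕ × FreeSemigroup ℕ) : Prop :=
  ∀ (T : Type) [Semigroup T], (∀ e' ∈ Sgm, SatisfiesId T e') → SatisfiesId T e

/-! ### Words and identities -/

/-- The word of an element of the free semigroup, as a nonempty list of letters. -/
def wl (w : FreeSemigroup ℕ) : List ℕ := w.head :: w.tail

theorem wl_of (a : ℕ) : wl (FreeSemigroup.of a) = [a] := rfl

theorem wl_mul (a b : FreeSemigroup ℕ) : wl (a * b) = wl a ++ wl b := by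
  simp [wl, FreeSemigroup.head_mul, FreeSemigroup.tail_mul]

theorem wl_injective : Function.Injective wl := by
  intro a b h
  simp only [wl, List.cons.injEq] at h
  exact FreeSemigroup.ext h.1 h.2

/-- `3 × 3` integer matrices. -/
abbrev M3 := Matrix (Fin 3) (Fin 3) ℤ

/-- The identity `s = t` between words, given as lists, holds in `UT₃(ℤ)`. -/
def HoldsL (s t : List ℕ) : Prop :=
  ∀ f : ℕ → M3, (∀ a, f a ∈ UT3Z) → (s.map f).prod = (t.map f).prod

theorem HoldsL.symm {s t : List ℕ} (h : HoldsL s t) : HoldsL t s :=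
  fun f hf => (h f hf).symm

theorem hom_val (φ : FreeSemigroup ℕ →ₙ* ↥UT3Z) (w : FreeSemigroup ℕ) :
    ((φ w : ↥UT3Z) : M3) =
      ((wl w).map (fun a => ((φ (FreeSemigroup.of a) : ↥UT3Z) : M3))).prod := by
  induction w using FreeSemigroup.recOnMul with
  | ih1 x => simp [wl_of]
  | ih2 x y hx hy => rw [map_mul, wl_mul, List.map_append, List.prod_append, ← hx, ← hy]; rfl

theorem satisfiesId_iff (e : FreeSemigroup ℕ × FreeSemigroup ℕ) :
    SatisfiesId ↥UT3Z e ↔ HoldsL (wl e.1) (wl e.2) := by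
  constructor
  · intro h f hf
    have := congrArg (Subtype.val) (h (FreeSemigroup.lift (fun a => (⟨f a, hf a⟩ : ↥UT3Z))))
    rw [hom_val, hom_val] at this
    simpa using this
  · intro h φ
    apply Subtype.ext
    rw [hom_val, hom_val]
    exact h _ (fun a => (φ (FreeSemigroup.of a)).2)

theorem hom_flatMap (ψ : FreeSemigroup ℕ →ₙ* FreeSemigroup ℕ) (w : FreeSemigroup ℕ) :
    wl (ψ w) = (wl w).flatMap (fun a => wl (ψ (FreeSemigroup.of a))) := by
  induction w using FreeSemigroup.recOnMul with
  | ih1 x => simp [wl_of]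
  | ih2 x y hx hy => rw [map_mul, wl_mul, wl_mul, List.flatMap_append, ← hx, ← hy]

theorem mem_UT3Z_iff (A : M3) : A ∈ UT3Z ↔ (A 1 0 = 0 ∧ A 2 0 = 0 ∧ A 2 1 = 0) ∧
    (A 0 0 = 0 ∨ A 0 0 = 1) ∧ (A 1 1 = 0 ∨ A 1 1 = 1) ∧ (A 2 2 = 0 ∨ A 2 2 = 1) := by
  change ((∀ i j : Fin 3, (j : ℕ) < (i : ℕ) → A i j = 0) ∧
    ∀ i : Fin 3, A i i = 0 ∨ A i i = 1) ↔ _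
  simp [Fin.forall_fin_succ]

/-! ### Words that are isoterms -/

theorem HoldsL.count_eq {s t : List ℕ} (h : HoldsL s t) (a : ℕ) : s.count a = t.count a := by
  have key : ∀ w : List ℕ, (w.map (fun b => if b = a then
      (!![1, 1, 0; 0, 1, 0; 0, 0, 1] : M3) else 1)).prod
      = !![1, (w.count a : ℤ), 0; 0, 1, 0; 0, 0, 1] := by
    intro w
    induction w with
    | nil => simp [Matrix.one_fin_three]
    | cons b w ih =>
      rw [List.map_cons, List.prod_cons, ih, List.count_cons]
      by_cases hb : b = a
      · simp [hb]
      · simp [hb]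
  have h1 := h (fun b => if b = a then (!![1, 1, 0; 0, 1, 0; 0, 0, 1] : M3) else 1)
    (fun b => by rw [mem_UT3Z_iff]; split_ifs <;> simp)
  rw [key, key] at h1
  have := congrFun (congrFun h1 0) 1
  simpa using this

theorem HoldsL.perm {s t : List ℕ} (h : HoldsL s t) : s.Perm t :=
  List.perm_iff_count.2 h.count_eq

/-- The letters read before the first occurrence of a given letter `x` are determined up to
order: map `y` to `1 + E₁₂` and `x` to `diag(0,1,1)`, which stops the counting. -/
theorem HoldsL.perm_before {x : ℕ} {p s p' t : List ℕ}
    (h : HoldsL (p ++ x :: s) (p' ++ x :: t)) (hp : x ∉ p) (hp' : x ∉ p') : p.Perm p' := by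
  rw [List.perm_iff_count]
  intro y
  by_cases hyx : y = x
  · subst hyx
    rw [List.count_eq_zero_of_not_mem hp, List.count_eq_zero_of_not_mem hp']
  set f : ℕ → M3 := fun b => if b = x then !![0, 0, 0; 0, 1, 0; 0, 0, 1] else
    if b = y then !![1, 1, 0; 0, 1, 0; 0, 0, 1] else 1 with hf
  have k1 : ∀ w : List ℕ, x ∉ w → (w.map f).prod
      = !![1, (w.count y : ℤ), 0; 0, 1, 0; 0, 0, 1] := by
    intro w hw
    induction w with
    | nil => simp [Matrix.one_fin_three]
    | cons b w ih =>
      simp only [List.mem_cons, not_or] at hw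
      rw [List.map_cons, List.prod_cons, ih hw.2, List.count_cons]
      have hbx : b ≠ x := fun e => hw.1 e.symm
      by_cases hb : b = y
      · simp [hf, hb, hyx]
      · simp [hf, hb, hbx]
  have k2 : ∀ w : List ℕ, (w.map f).prod 1 0 = 0 ∧ (w.map f).prod 1 1 = 1
      ∧ (w.map f).prod 1 2 = 0 := by
    intro w
    induction w with
    | nil => simp
    | cons b w ih =>
      obtain ⟨h0, h1, h2⟩ := ih
      rw [List.map_cons, List.prod_cons]
      simp only [Matrix.mul_apply, Fin.sum_univ_three, h0, h1, h2]
      by_cases hb : b = x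
      · simp [hf, hb]
      · by_cases hb' : b = y
        · simp [hf, hb', hyx]
        · simp [hf, hb, hb']
  have h1 := h f (fun b => by
    rw [mem_UT3Z_iff, hf]; dsimp only; split_ifs <;> simp)
  have k3 : ∀ p s : List ℕ, x ∉ p → ((p ++ x :: s).map f).prod 0 1 = p.count y := by
    intro p s hp
    obtain ⟨h0, h1, h2⟩ := k2 s
    have fx : f x = !![0, 0, 0; 0, 1, 0; 0, 0, 1] := by simp [hf]
    rw [List.map_append, List.prod_append, k1 p hp, List.map_cons, List.prod_cons, fx]
    generalize (s.map f).prod = B at *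
    simp [Matrix.mul_apply, Matrix.vecMul, dotProduct, Fin.sum_univ_three, h1]
  have := congrFun (congrFun h1 0) 1
  rw [k3 _ _ hp, k3 _ _ hp'] at this
  exact_mod_cast this

/-- The order of two letters `x`, `y` occurring once each between two linear letters `l`, `m`
is determined: map `l`, `m`, `x`, `y` to `diag(1,0,0)`, `diag(0,0,1)`, `1 + E₁₂`, `1 + E₂₃`. -/
theorem HoldsL.order {l m x y : ℕ} {p₀ p₁ q₁ q₂ p₂ p₀' p₁' q₁' q₂' p₂' : List ℕ}
    (h : HoldsL (p₀ ++ l :: (p₁ ++ x :: (q₁ ++ y :: (q₂ ++ m :: p₂))))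
      (p₀' ++ l :: (p₁' ++ y :: (q₁' ++ x :: (q₂' ++ m :: p₂')))))
    (hlm : l ≠ m) (hlx : l ≠ x) (hly : l ≠ y) (hmx : m ≠ x) (hmy : m ≠ y) (hxy : x ≠ y)
    (h0 : m ∉ p₀) (h0' : m ∉ p₀') (h2 : l ∉ p₂) (h2' : l ∉ p₂')
    (h1 : ∀ b ∈ p₁ ++ q₁ ++ q₂, b ≠ l ∧ b ≠ m ∧ b ≠ x ∧ b ≠ y)
    (h1' : ∀ b ∈ p₁' ++ q₁' ++ q₂', b ≠ l ∧ b ≠ m ∧ b ≠ x ∧ b ≠ y) : False := by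
  set f : ℕ → M3 := fun b =>
    if b = l then !![1, 0, 0; 0, 0, 0; 0, 0, 0] else
    if b = m then !![0, 0, 0; 0, 0, 0; 0, 0, 1] else
    if b = x then !![1, 1, 0; 0, 1, 0; 0, 0, 1] else
    if b = y then !![1, 0, 0; 0, 1, 1; 0, 0, 1] else 1 with hf
  have fl : f l = !![1, 0, 0; 0, 0, 0; 0, 0, 0] := by simp [hf]
  have fm : f m = !![0, 0, 0; 0, 0, 0; 0, 0, 1] := by simp [hf, hlm.symm]
  have fx : f x = !![1, 1, 0; 0, 1, 0; 0, 0, 1] := by simp [hf, hlx.symm, hmx.symm]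
  have fy : f y = !![1, 0, 0; 0, 1, 1; 0, 0, 1] := by
    simp [hf, hly.symm, hmy.symm, hxy.symm]
  have hmem : ∀ b, f b ∈ UT3Z := fun b => by
    rw [mem_UT3Z_iff, hf]; dsimp only; split_ifs <;> simp
  have one : ∀ w : List ℕ, (∀ b ∈ w, b ≠ l ∧ b ≠ m ∧ b ≠ x ∧ b ≠ y) →
      (w.map f).prod = 1 := by
    intro w hw
    apply List.prod_eq_one
    intro A hA
    obtain ⟨b, hb, rfl⟩ := List.mem_map.1 hA
    obtain ⟨a1, a2, a3, a4⟩ := hw b hb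
    simp [hf, a1, a2, a3, a4]
  have tl : ∀ w : List ℕ, m ∉ w → (w.map f).prod 0 0 = 1 := by
    intro w hw
    induction w with
    | nil => simp
    | cons b w ih =>
      simp only [List.mem_cons, not_or] at hw
      rw [List.map_cons, List.prod_cons]
      have hcol : (w.map f).prod 1 0 = 0 ∧ (w.map f).prod 2 0 = 0 := by
        clear ih hw
        induction w with
        | nil => simp
        | cons c w ih =>
          have := (mem_UT3Z_iff _).1 (hmem c)
          rw [List.map_cons, List.prod_cons]
          simp [Matrix.mul_apply, Fin.sum_univ_three, ih, this]
      have hb0 : f b 0 0 = 1 := by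
        have : b ≠ m := fun e => hw.1 e.symm
        simp only [hf, this, if_false]
        split_ifs <;> simp
      simp [Matrix.mul_apply, Fin.sum_univ_three, ih hw.2, hcol, hb0]
  have br : ∀ w : List ℕ, l ∉ w → (w.map f).prod 2 2 = 1 := by
    intro w hw
    induction w with
    | nil => simp
    | cons b w ih =>
      simp only [List.mem_cons, not_or] at hw
      rw [List.map_cons, List.prod_cons]
      have hb := (mem_UT3Z_iff _).1 (hmem b)
      have hb2 : f b 2 2 = 1 := by
        have : b ≠ l := fun e => hw.1 e.symm
        simp only [hf, this, if_false]
        split_ifs <;> simp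
      simp [Matrix.mul_apply, Fin.sum_univ_three, ih hw.2, hb, hb2]
  have e := congrFun (congrFun (h f hmem) 0) 2
  simp only [List.mem_append] at h1 h1'
  simp only [List.map_append, List.map_cons, List.prod_append, List.prod_cons,
    one p₁ (fun b hb => h1 b (by simp [hb])), one q₁ (fun b hb => h1 b (by simp [hb])),
    one q₂ (fun b hb => h1 b (by simp [hb])), one p₁' (fun b hb => h1' b (by simp [hb])),
    one q₁' (fun b hb => h1' b (by simp [hb])), one q₂' (fun b hb => h1' b (by simp [hb])),
    one_mul] at e
  have t0 := tl p₀ h0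
  have t0' := tl p₀' h0'
  have b2 := br p₂ h2
  have b2' := br p₂' h2'
  generalize (p₀.map f).prod = A at *
  generalize (p₀'.map f).prod = A' at *
  generalize (p₂.map f).prod = B at *
  generalize (p₂'.map f).prod = B' at *
  rw [fl, fm, fx, fy] at e
  simp [Matrix.mul_apply, Matrix.vecMul, dotProduct, Fin.sum_univ_three, t0, b2, t0'] at e

theorem exists_first {P : ℕ → Prop} {w : List ℕ} (h : ∃ a ∈ w, P a) :
    ∃ p a q, w = p ++ a :: q ∧ P a ∧ ∀ b ∈ p, ¬ P b := by
  induction w with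
  | nil => simp at h
  | cons c w ih =>
    by_cases hc : P c
    · exact ⟨[], c, w, rfl, hc, by simp⟩
    · obtain ⟨a, ha, hPa⟩ := h
      have : ∃ a ∈ w, P a := by
        rcases List.mem_cons.1 ha with rfl | ha
        · exact absurd hPa hc
        · exact ⟨a, ha, hPa⟩
      obtain ⟨p, a, q, rfl, h1, h2⟩ := ih this
      refine ⟨c :: p, a, q, rfl, h1, ?_⟩
      intro b hb
      rcases List.mem_cons.1 hb with rfl | hb
      · exact hc
      · exact h2 b hb

theorem exists_last {P : ℕ → Prop} {w : List ℕ} (h : ∃ a ∈ w, P a) :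
    ∃ p a q, w = p ++ a :: q ∧ P a ∧ ∀ b ∈ q, ¬ P b := by
  obtain ⟨p, a, q, h0, h1, h2⟩ := exists_first (w := w.reverse) (P := P) (by simpa using h)
  refine ⟨q.reverse, a, p.reverse, ?_, h1, by simpa using h2⟩
  rw [← List.reverse_reverse w, h0]
  simp

/-- In the word `s`, every factor all of whose letters occur at least twice in `s` has
pairwise distinct letters. -/
def GapsNodup (s : List ℕ) : Prop :=
  ∀ r, r <:+: s → (∀ a ∈ r, 2 ≤ s.count a) → r.Nodup

/-- Words equal in `UT₃(ℤ)`, the first with repetition-free gaps, do not diverge strictly between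
two linear letters. By `HoldsL.perm_before`, both letters `x ≠ y` at the divergence have occurred
before, and the two words have the same letters, once each, in the gap where they diverge; there
`x` and `y` come in opposite orders, which `HoldsL.order` excludes. -/
theorem no_first_difference {s t p s₁ t₁ : List ℕ} {x y : ℕ} (h : HoldsL s t)
    (hs : GapsNodup s) (es : s = p ++ x :: s₁) (et : t = p ++ y :: t₁) (hxy : x ≠ y)
    (hp : ∃ a ∈ p, s.count a = 1) (hq : ∃ a ∈ s₁, s.count a = 1) : False := by
  have hc := h.count_eq
  have hperm : (x :: s₁).Perm (y :: t₁) := by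
    have := h.perm
    rw [es, et] at this
    exact (List.perm_append_left_iff p).1 this
  have hxt : x ∈ t₁ := by
    have := hperm.subset (List.mem_cons_self)
    rcases List.mem_cons.1 this with e | e
    · exact absurd e hxy
    · exact e
  have hys : y ∈ s₁ := by
    have := hperm.symm.subset (List.mem_cons_self)
    rcases List.mem_cons.1 this with e | e
    · exact absurd e.symm hxy
    · exact e
  -- If `x` were new after `p`, then exactly `p` would precede its first occurrence in `s`, but at
  -- least one more letter in `t`; likewise for `y`.
  have hxp : x ∈ p := by
    by_contra hxp
    obtain ⟨a, b, c, e, rfl, hb⟩ := exists_first (P := fun z => z = x) ⟨x, hxt, rfl⟩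
    have h' := h
    rw [es, et, e] at h'
    have := HoldsL.perm_before (p' := p ++ y :: a) (by simpa using h') hxp (by
      simp only [List.mem_append, List.mem_cons, not_or]
      exact ⟨hxp, hxy, fun hh => hb _ hh rfl⟩)
    have := this.length_eq
    simp at this
  have hyp : y ∈ p := by
    by_contra hyp
    obtain ⟨a, b, c, e, rfl, hb⟩ := exists_first (P := fun z => z = y) ⟨y, hys, rfl⟩
    have h' := h
    rw [es, et, e] at h'
    have := HoldsL.perm_before (p := p ++ x :: a) (by simpa using h') (by
      simp only [List.mem_append, List.mem_cons, not_or]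
      exact ⟨hyp, hxy.symm, fun hh => hb _ hh rfl⟩) hyp
    have := this.length_eq
    simp at this
  -- The gap between consecutive linear letters `l`, `m` in which the words start to differ.
  obtain ⟨p₀, l, p₁, ep, hl, hp₁⟩ := exists_last hp
  obtain ⟨q, m, s₂, eq, hm, hq₁⟩ := exists_first hq
  have es' : s = p₀ ++ l :: (p₁ ++ x :: (q ++ m :: s₂)) := by simp [es, ep, eq]
  have cl : (p₀ ++ l :: (p₁ ++ x :: (q ++ m :: s₂))).count l = 1 := by rw [← es', hl]
  have cm : (p₀ ++ l :: (p₁ ++ x :: (q ++ m :: s₂))).count m = 1 := by rw [← es', hm]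
  have hx2 : 2 ≤ s.count x := by
    rw [es, List.count_append, List.count_cons_self]
    have := List.count_pos_iff.2 hxp
    omega
  have hy2 : 2 ≤ s.count y := by
    rw [es, List.count_append, List.count_cons_of_ne hxy]
    have := List.count_pos_iff.2 hyp
    have := List.count_pos_iff.2 hys
    omega
  have hlx : l ≠ x := fun e => by rw [e] at hl; omega
  have hly : l ≠ y := fun e => by rw [e] at hl; omega
  have hmx : m ≠ x := fun e => by rw [e] at hm; omega
  have hmy : m ≠ y := fun e => by rw [e] at hm; omega
  have hlm : l ≠ m := by
    rintro rfl
    simp [List.count_cons] at cl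
    omega
  have ml : l ∉ p₀ ∧ l ∉ p₁ ∧ l ∉ q ∧ l ∉ s₂ := by
    simp only [List.count_append, List.count_cons, beq_self_eq_true, if_true] at cl
    refine ⟨?_, ?_, ?_, ?_⟩ <;> intro hh <;> have := List.count_pos_iff.2 hh <;> omega
  have mm : m ∉ p₀ ∧ m ∉ p₁ ∧ m ∉ q ∧ m ∉ s₂ := by
    simp only [List.count_append, List.count_cons, beq_self_eq_true, if_true] at cm
    refine ⟨?_, ?_, ?_, ?_⟩ <;> intro hh <;> have := List.count_pos_iff.2 hh <;> omega
  have hnd : (p₁ ++ x :: q).Nodup := by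
    refine hs _ ⟨p₀ ++ [l], m :: s₂, by simp [es']⟩ ?_
    intro a ha
    have ha1 : s.count a ≠ 1 := by
      rcases List.mem_append.1 ha with ha | ha
      · exact hp₁ a ha
      · rcases List.mem_cons.1 ha with rfl | ha
        · omega
        · exact hq₁ a ha
    have : 0 < s.count a := by
      rw [List.count_pos_iff, es']
      simp only [List.mem_append, List.mem_cons] at ha ⊢
      tauto
    omega
  -- The same gap in `t`.
  have hmt : m ∈ t₁ := by
    have : m ∈ y :: t₁ := hperm.subset (by simp [eq])
    rcases List.mem_cons.1 this with e | e
    · exact absurd e hmy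
    · exact e
  obtain ⟨q', m', t₂, eq', rfl, hq'⟩ := exists_first (P := fun z => z = m) ⟨m, hmt, rfl⟩
  have hmp : m' ∉ p := by
    rw [ep]; simp [mm, hlm.symm]
  have hpm : (x :: q).Perm (y :: q') := by
    have h' := h
    rw [es, et, eq, eq'] at h'
    have := HoldsL.perm_before (p := p ++ x :: q) (p' := p ++ y :: q') (x := m')
      (by simpa using h') (by simp [hmp, hmx, mm]) (by
        simp only [List.mem_append, List.mem_cons, not_or]
        exact ⟨hmp, hmy, fun hh => hq' _ hh rfl⟩)
    exact (List.perm_append_left_iff p).1 this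
  have hnd' : (p₁ ++ y :: q').Nodup :=
    ((List.perm_append_left_iff p₁).2 hpm).nodup_iff.1 hnd
  have hyq : y ∈ q := by
    rcases List.mem_cons.1 (hpm.symm.subset List.mem_cons_self) with e | e
    · exact absurd e.symm hxy
    · exact e
  have hxq : x ∈ q' := by
    rcases List.mem_cons.1 (hpm.subset List.mem_cons_self) with e | e
    · exact absurd e hxy
    · exact e
  have hlq' : l ∉ q' := by
    intro hh
    have : l ∈ x :: q := hpm.symm.subset (List.mem_cons_of_mem _ hh)
    rcases List.mem_cons.1 this with e | e
    · exact hlx e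
    · exact ml.2.2.1 e
  have hlt₂ : l ∉ t₂ := by
    intro hh
    have h1 : l ∈ y :: t₁ := by simp [eq', hh]
    have h2 : l ∈ x :: s₁ := hperm.symm.subset h1
    rw [eq] at h2
    simp [hlx, ml, hlm] at h2
  obtain ⟨q₁, q₂, rfl⟩ := List.append_of_mem hyq
  obtain ⟨q₁', q₂', rfl⟩ := List.append_of_mem hxq
  have h' := h
  rw [es', et, ep, eq'] at h'
  refine HoldsL.order (p₀ := p₀) (p₁ := p₁) (q₁ := q₁) (q₂ := q₂) (p₂ := s₂) (p₀' := p₀)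
    (p₁' := p₁) (q₁' := q₁') (q₂' := q₂') (p₂' := t₂) (by simpa using h')
    hlm hlx hly hmx hmy hxy mm.1 mm.1 ml.2.2.2 hlt₂ ?_ ?_
  · have h1 := ml.2.1
    have h2 := ml.2.2.1
    have h3 := mm.2.1
    have h4 := mm.2.2.1
    intro b hb
    simp only [List.mem_append, List.mem_cons, not_or, List.nodup_append, List.nodup_cons] at *
    refine ⟨?_, ?_, ?_, ?_⟩ <;> rintro rfl <;> grind
  · have h1 := ml.2.1
    have h3 := mm.2.1
    have h4 : m' ∉ q₁' ++ x :: q₂' := fun hh => hq' _ hh rfl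
    intro b hb
    simp only [List.mem_append, List.mem_cons, not_or, List.nodup_append, List.nodup_cons] at *
    refine ⟨?_, ?_, ?_, ?_⟩ <;> rintro rfl <;> grind

theorem eq_of_no_first_difference {s t : List ℕ} (hlen : s.length = t.length)
    (h : ∀ p x y s₁ t₁, s = p ++ x :: s₁ → t = p ++ y :: t₁ → x = y) : s = t := by
  induction s generalizing t with
  | nil => exact (List.length_eq_zero_iff.1 hlen.symm).symm
  | cons a s ih =>
    cases t with
    | nil => simp at hlen
    | cons b t =>
      obtain rfl := h [] a b s t rfl rfl
      rw [ih (t := t) (by simpa using hlen)]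
      intro p x y s₁ t₁ e₁ e₂
      exact h (a :: p) x y s₁ t₁ (by simp [e₁]) (by simp [e₂])

/-- A word with repetition-free gaps is an isoterm for `UT₃(ℤ)`. -/
theorem GapsNodup.isoterm {s t : List ℕ} (hs : GapsNodup s) (h : HoldsL s t) : s = t := by
  refine eq_of_no_first_difference h.perm.length_eq ?_
  intro p x y s₁ t₁ es et
  by_contra hxy
  -- Fresh letters `L`, `M` at both ends make every gap bounded by linear letters.
  obtain ⟨L, hL⟩ := Infinite.exists_notMem_finset s.toFinset
  obtain ⟨M, hM⟩ := Infinite.exists_notMem_finset (insert L s.toFinset)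
  simp only [Finset.mem_insert, List.mem_toFinset, not_or] at hL hM
  have cM : (L :: (s ++ [M])).count M = 1 := by
    simp [List.count_eq_zero_of_not_mem hM.2, Ne.symm hM.1]
  have cL : (L :: (s ++ [M])).count L = 1 := by
    simp [List.count_eq_zero_of_not_mem hL, hM.1]
  refine no_first_difference (s := L :: (s ++ [M])) (t := L :: (t ++ [M])) (p := L :: p)
    (s₁ := s₁ ++ [M]) (t₁ := t₁ ++ [M]) ?_ ?_ (by simp [es]) (by simp [et]) hxy
    ⟨L, by simp, cL⟩ ⟨M, by simp, cM⟩
  · intro f hf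
    simp [h f hf]
  · intro r hr hr2
    have hLr : L ∉ r := fun hh => by have := hr2 _ hh; omega
    have hMr : M ∉ r := fun hh => by have := hr2 _ hh; omega
    have hrs : r <:+: s := by
      have h1 : r <:+: s ++ [M] := by
        rcases List.infix_cons_iff.1 hr with h1 | h1
        · rcases List.prefix_cons_iff.1 h1 with rfl | ⟨r', rfl, -⟩
          · exact List.nil_infix
          · simp at hLr
        · exact h1
      rcases List.infix_concat_iff.1 h1 with h1 | h1
      · rcases List.suffix_concat_iff.1 h1 with rfl | ⟨r', rfl, -⟩
        · exact List.nil_infix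
        · simp at hMr
      · exact h1
    refine hs r hrs ?_
    intro a ha
    have h2 := hr2 a ha
    have h3 : L ≠ a := fun e => hLr (e ▸ ha)
    have h4 : M ≠ a := fun e => hMr (e ▸ ha)
    simpa [List.count_cons, h3, h4] using h2

/-! ### The words -/

/-- The two letters `2j`, `2j+1`, in this order if `b` is false and swapped otherwise. -/
def pairW (b : Bool) (j : ℕ) : List ℕ := if b then [2 * j + 1, 2 * j] else [2 * j, 2 * j + 1]

/-- Orientation of the `j`-th pair in round `k`: the pair `0` is governed by `f`, the other
pairs spell the four binary digits of `k` periodically. -/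
def bitOf (f : ℕ → Bool) (k : ℕ) : ℕ → Bool
  | 0 => f k
  | i + 1 => k.testBit (i % 4)

/-- Round `k`: the pairs `0, …, n`, oriented by `bitOf f k`. -/
def roundW (f : ℕ → Bool) (n k : ℕ) : List ℕ :=
  (List.range (n + 1)).flatMap (fun j => pairW (bitOf f k j) j)

/-- The concatenation of the rounds `0, …, 15`. -/
def bigW (f : ℕ → Bool) (n : ℕ) : List ℕ := (List.range 16).flatMap (roundW f n)

/-- Pair `0` is swapped in rounds `5` and `11`. -/
def fU (k : ℕ) : Bool := decide (k = 5 ∨ k = 11)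

/-- Pair `0` is swapped in rounds `7` and `9`. -/
def fV (k : ℕ) : Bool := decide (k = 7 ∨ k = 9)

/-! ### The identity holds -/

/-- `A` is upper triangular with diagonal `d`. -/
def Tri (d : Fin 3 → ℤ) (A : M3) : Prop :=
  (A 1 0 = 0 ∧ A 2 0 = 0 ∧ A 2 1 = 0) ∧ A 0 0 = d 0 ∧ A 1 1 = d 1 ∧ A 2 2 = d 2

theorem Tri.mul {d e : Fin 3 → ℤ} {A B : M3} (hA : Tri d A) (hB : Tri e B) :
    Tri (d * e) (A * B) := by
  obtain ⟨⟨a1, a2, a3⟩, a4, a5, a6⟩ := hA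
  obtain ⟨⟨b1, b2, b3⟩, b4, b5, b6⟩ := hB
  simp [Tri, Matrix.mul_apply, Fin.sum_univ_three, *]

theorem tri_one : Tri 1 1 := by simp [Tri]

theorem tri_of_mem {A : M3} (h : A ∈ UT3Z) : Tri (fun i => A i i) A := by
  simp [Tri, ((mem_UT3Z_iff A).1 h).1]

theorem diag_idem {A : M3} (h : A ∈ UT3Z) :
    (fun i => A i i) * (fun i => A i i) = (fun i => A i i) := by
  funext i
  rcases h.2 i with e | e <;> simp [e]

/-- Four upper triangular matrices with a common diagonal such that `A + B` and `C + D` agree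
next to the diagonal. This is preserved by componentwise products, because the entries next to
the diagonal of a product are linear in those of the factors. -/
def Quad (d : Fin 3 → ℤ) (A B C D : M3) : Prop :=
  (Tri d A ∧ Tri d B ∧ Tri d C ∧ Tri d D) ∧
    A 0 1 + B 0 1 = C 0 1 + D 0 1 ∧ A 1 2 + B 1 2 = C 1 2 + D 1 2

theorem Quad.mul {d e : Fin 3 → ℤ} {A B C D A' B' C' D' : M3} (h : Quad d A B C D)
    (h' : Quad e A' B' C' D') : Quad (d * e) (A * A') (B * B') (C * C') (D * D') := by
  obtain ⟨⟨hA, hB, hC, hD⟩, h1, h2⟩ := h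
  obtain ⟨⟨hA', hB', hC', hD'⟩, h1', h2'⟩ := h'
  refine ⟨⟨hA.mul hA', hB.mul hB', hC.mul hC', hD.mul hD'⟩, ?_, ?_⟩
  · simp only [Matrix.mul_apply, Fin.sum_univ_three, hA.2, hB.2, hC.2, hD.2, hA'.2, hB'.2,
      hC'.2, hD'.2, hA'.1, hB'.1, hC'.1, hD'.1]
    linear_combination d 0 * h1' + e 1 * h1
  · simp only [Matrix.mul_apply, Fin.sum_univ_three, hA.2, hB.2, hC.2, hD.2, hA'.2, hB'.2,
      hC'.2, hD'.2, hA.1, hB.1, hC.1, hD.1]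
    linear_combination d 1 * h2' + e 2 * h2

/-- The value of a word under the substitution `g`. -/
def val (g : ℕ → M3) (w : List ℕ) : M3 := (w.map g).prod

theorem val_append (g : ℕ → M3) (v w : List ℕ) : val g (v ++ w) = val g v * val g w := by
  simp [val]

/-- The part of round `k` following pair `0`. -/
def codeW (n k : ℕ) : List ℕ :=
  (List.range n).flatMap (fun i => pairW (k.testBit (i % 4)) (i + 1))

theorem roundW_eq (f : ℕ → Bool) (n k : ℕ) :
    roundW f n k = pairW (f k) 0 ++ codeW n k := by
  rw [roundW, List.range_succ_eq_map, List.flatMap_cons, List.flatMap_map]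
  rfl

/-- The diagonal of the value of the pair `j`, in either order. -/
def pairD (g : ℕ → M3) (j : ℕ) : Fin 3 → ℤ := fun i => g (2 * j) i i * g (2 * j + 1) i i

theorem tri_pair {g : ℕ → M3} (hg : ∀ a, g a ∈ UT3Z) (b : Bool) (j : ℕ) :
    Tri (pairD g j) (val g (pairW b j)) := by
  have h1 := (tri_of_mem (hg (2 * j))).mul (tri_of_mem (hg (2 * j + 1)))
  have h2 := (tri_of_mem (hg (2 * j + 1))).mul (tri_of_mem (hg (2 * j)))
  rw [mul_comm] at h2
  change Tri (pairD g j) _ at h1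
  change Tri (pairD g j) _ at h2
  cases b
  · simpa [val, pairW] using h1
  · simpa [val, pairW] using h2

theorem pairD_idem {g : ℕ → M3} (hg : ∀ a, g a ∈ UT3Z) (j : ℕ) :
    pairD g j * pairD g j = pairD g j := by
  have h1 := diag_idem (hg (2 * j))
  have h2 := diag_idem (hg (2 * j + 1))
  change ((fun i => g (2 * j) i i) * (fun i => g (2 * j + 1) i i)) *
    ((fun i => g (2 * j) i i) * (fun i => g (2 * j + 1) i i)) =
    ((fun i => g (2 * j) i i) * (fun i => g (2 * j + 1) i i))
  rw [mul_mul_mul_comm, h1, h2]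

/-- The diagonal of the values of the words `codeW n k`. -/
def codeD (g : ℕ → M3) : ℕ → Fin 3 → ℤ
  | 0 => 1
  | n + 1 => codeD g n * pairD g (n + 1)

theorem codeW_succ (n k : ℕ) :
    codeW (n + 1) k = codeW n k ++ pairW (k.testBit (n % 4)) (n + 1) := by
  simp [codeW, List.range_succ]

theorem tri_code {g : ℕ → M3} (hg : ∀ a, g a ∈ UT3Z) (n k : ℕ) :
    Tri (codeD g n) (val g (codeW n k)) := by
  induction n with
  | zero => exact tri_one
  | succ n ih =>
    rw [codeW_succ, val_append]
    exact ih.mul (tri_pair hg _ _)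

theorem codeD_idem {g : ℕ → M3} (hg : ∀ a, g a ∈ UT3Z) (n : ℕ) :
    codeD g n * codeD g n = codeD g n := by
  induction n with
  | zero => simp [codeD]
  | succ n ih => simp only [codeD]; rw [mul_mul_mul_comm, ih, pairD_idem hg]

/-- If in each of the four binary digits the pairs `k₁, k₂` and `k₃, k₄` have the same digits
up to order, then the codes of these rounds form a `Quad`. -/
theorem quad_code {g : ℕ → M3} (hg : ∀ a, g a ∈ UT3Z) {k₁ k₂ k₃ k₄ : ℕ}
    (hk : ∀ b < 4, (k₁.testBit b = k₃.testBit b ∧ k₂.testBit b = k₄.testBit b) ∨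
      (k₁.testBit b = k₄.testBit b ∧ k₂.testBit b = k₃.testBit b)) (n : ℕ) :
    Quad (codeD g n) (val g (codeW n k₁)) (val g (codeW n k₂)) (val g (codeW n k₃))
      (val g (codeW n k₄)) := by
  induction n with
  | zero => exact ⟨⟨tri_one, tri_one, tri_one, tri_one⟩, rfl, rfl⟩
  | succ n ih =>
    simp only [codeW_succ, val_append]
    refine ih.mul ⟨⟨tri_pair hg _ _, tri_pair hg _ _, tri_pair hg _ _, tri_pair hg _ _⟩, ?_⟩
    rcases hk (n % 4) (Nat.mod_lt _ (by norm_num)) with ⟨e1, e2⟩ | ⟨e1, e2⟩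
    · rw [e1, e2]; exact ⟨rfl, rfl⟩
    · rw [e1, e2]; exact ⟨add_comm _ _, add_comm _ _⟩

/-- The entries next to the diagonal of the commutator `Z Y - Y Z` vanish when multiplied by
the corresponding diagonal entries of `Y` and `Z`. -/
theorem commutator_facts {φ : Fin 3 → ℤ} {Y Z : M3} (hY : Y ∈ UT3Z) (hZ : Z ∈ UT3Z)
    (hφ : φ = fun i => Y i i * Z i i) : Tri 0 (Z * Y - Y * Z) ∧
      φ 0 * (Z * Y - Y * Z) 0 1 * φ 1 = 0 ∧ φ 1 * (Z * Y - Y * Z) 1 2 * φ 2 = 0 := by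
  obtain ⟨⟨a1, a2, a3⟩, a4, a5, a6⟩ := (mem_UT3Z_iff Y).1 hY
  obtain ⟨⟨b1, b2, b3⟩, b4, b5, b6⟩ := (mem_UT3Z_iff Z).1 hZ
  subst hφ
  simp only [Tri, Matrix.sub_apply, Matrix.mul_apply, Fin.sum_univ_three, a1, a2, a3, b1, b2, b3,
    Pi.zero_apply]
  refine ⟨⟨⟨by ring, by ring, by ring⟩, by ring, by ring, by ring⟩, ?_, ?_⟩
  · rcases a4 with h | h <;> rcases a5 with h' | h' <;> rcases b4 with k | k <;>
      rcases b5 with k' | k' <;> simp only [h, h', k, k'] <;> ring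
  · rcases a5 with h | h <;> rcases a6 with h' | h' <;> rcases b5 with k | k <;>
      rcases b6 with k' | k' <;> simp only [h, h', k, k'] <;> ring

/-- The commutator `Z Y - Y Z` placed inside a product: only the codes `C`, `C'` adjacent to
the commutator matter, through one entry each, and linearly. -/
theorem commutator_term {φ d : Fin 3 → ℤ} {Y Z : M3} (hY : Y ∈ UT3Z) (hZ : Z ∈ UT3Z)
    (hφ : φ = fun i => Y i i * Z i i) (hφφ : φ * φ = φ) (hd : d * d = d)
    (hF : Tri φ (Y * Z)) :
    ∃ (K : M3) (α β : ℤ), ∀ Q C C' X : M3, Tri (φ * d) Q → Tri d C → Tri d C' →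
      Tri (φ * d) X → Q * (Y * Z) * C * (Z * Y - Y * Z) * C' * (Y * Z) * X =
        K + (α * C 0 1 + β * C' 1 2) • !![0, 0, 1; 0, 0, 0; 0, 0, 0] := by
  obtain ⟨hΔ, key1, key2⟩ := commutator_facts hY hZ hφ
  clear hφ
  generalize Z * Y - Y * Z = Δ at *
  generalize Y * Z = F at *
  refine ⟨!![0, φ 0 * d 0 * Δ 0 1 * (φ 1 * d 1),
      φ 0 * d 0 * Δ 0 2 * (φ 2 * d 2) + φ 0 * d 0 * Δ 0 1 * (d 1 * F 1 2 * (φ 2 * d 2)) +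
        φ 0 * d 0 * F 0 1 * d 1 * Δ 1 2 * (φ 2 * d 2);
      0, 0, φ 1 * d 1 * Δ 1 2 * (φ 2 * d 2); 0, 0, 0],
    φ 0 * d 0 * φ 0 * Δ 1 2 * (φ 2 * d 2), φ 0 * d 0 * Δ 0 1 * (φ 2 * (φ 2 * d 2)), ?_⟩
  intro Q C C' X hQ hC hC' hX
  have hA : Tri (φ * d) (Q * F * C) := by
    have := (hQ.mul hF).mul hC
    rwa [show φ * d * φ * d = φ * d by
      rw [mul_right_comm φ d φ, hφφ, mul_assoc, hd]] at this
  have hB : Tri (φ * d) (C' * F * X) := by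
    have := (hC'.mul hF).mul hX
    rwa [show d * φ * (φ * d) = φ * d by
      rw [mul_comm d φ, mul_mul_mul_comm, hφφ, hd]] at this
  have hA1 : (Q * F * C) 0 1 = φ 0 * d 0 * (φ 0 * C 0 1 + F 0 1 * d 1) + Q 0 1 * φ 1 * d 1 := by
    simp only [Matrix.mul_apply, Fin.sum_univ_three, hF.1, hC.1, hQ.2, hF.2, hC.2,
      Pi.mul_apply]
    ring
  have hB1 : (C' * F * X) 1 2 = d 1 * φ 1 * X 1 2 + (d 1 * F 1 2 + C' 1 2 * φ 2) * (φ 2 * d 2) := by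
    simp only [Matrix.mul_apply, Fin.sum_univ_three, hC'.1, hF.1, hC'.2, hF.2, hX.2,
      Pi.mul_apply]
    ring
  have e : Q * F * C * Δ * C' * F * X = (Q * F * C) * Δ * (C' * F * X) := by
    simp only [mul_assoc]
  rw [e]
  generalize Q * F * C = A at *
  generalize C' * F * X = B at *
  obtain ⟨⟨u1, u2, u3⟩, u4, u5, u6⟩ := hA
  obtain ⟨⟨v1, v2, v3⟩, v4, v5, v6⟩ := hB
  obtain ⟨⟨w1, w2, w3⟩, w4, w5, w6⟩ := hΔ
  simp only [Pi.mul_apply, Pi.zero_apply] at *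
  ext i j
  fin_cases i <;> fin_cases j <;>
    simp only [Fin.zero_eta, Fin.mk_one, Fin.reduceFinMk, Matrix.mul_apply, Fin.sum_univ_three,
      *] <;> simp
  linear_combination (d 0 * d 1 * X 1 2) * key1 + (Q 0 1 * d 1 * d 2) * key2

/-- A product with two commutators vanishes when they are separated by a matrix whose diagonal is
bounded by those of `Y` and `Z`. -/
theorem two_commutators {φ d : Fin 3 → ℤ} {Y Z : M3} (hY : Y ∈ UT3Z) (hZ : Z ∈ UT3Z)
    (hφ : φ = fun i => Y i i * Z i i) {A B C : M3} (hA : Tri (φ * d) A) (hB : Tri (φ * d) B)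
    (hC : Tri (φ * d) C) : A * (Z * Y - Y * Z) * B * (Z * Y - Y * Z) * C = 0 := by
  obtain ⟨hΔ, key1, -⟩ := commutator_facts hY hZ hφ
  clear hφ
  generalize Z * Y - Y * Z = Δ at *
  obtain ⟨⟨u1, u2, u3⟩, u4, u5, u6⟩ := hA
  obtain ⟨⟨v1, v2, v3⟩, v4, v5, v6⟩ := hB
  obtain ⟨⟨t1, t2, t3⟩, t4, t5, t6⟩ := hC
  obtain ⟨⟨w1, w2, w3⟩, w4, w5, w6⟩ := hΔ
  simp only [Pi.mul_apply, Pi.zero_apply] at *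
  ext i j
  fin_cases i <;> fin_cases j <;>
    simp only [Fin.zero_eta, Fin.mk_one, Fin.reduceFinMk, Matrix.mul_apply, Fin.sum_univ_three,
      *] <;> simp [-mul_eq_zero]
  linear_combination (d 0 * d 1 * Δ 1 2 * (φ 2 * d 2)) * key1

/-- The words with swaps in rounds `5, 11` and in rounds `7, 9` are equal in `UT₃(ℤ)`. -/
theorem holds_big (n : ℕ) : HoldsL (bigW fU n) (bigW fV n) := by
  intro g hg
  change val g _ = val g _
  set c : ℕ → M3 := fun k => val g (codeW n k) with hc
  set d := codeD g n with hd
  set φ := pairD g 0 with hφ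
  set Y := g 0 with hY
  set Z := g 1 with hZ
  have hφ' : φ = fun i => Y i i * Z i i := rfl
  have dd : d * d = d := codeD_idem hg n
  have φφ : φ * φ = φ := pairD_idem hg 0
  have tc : ∀ k, Tri d (c k) := fun k => tri_code hg n k
  have tF : Tri φ (Y * Z) := by simpa [val, pairW] using tri_pair hg false 0
  have ee : φ * d * (φ * d) = φ * d := by rw [mul_mul_mul_comm, φφ, dd]
  have tR : ∀ k, Tri (φ * d) (Y * Z * c k) := fun k => tF.mul (tc k)
  have tM : ∀ {A B : M3}, Tri (φ * d) A → Tri (φ * d) B → Tri (φ * d) (A * B) := by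
    intro A B hA hB
    have := hA.mul hB
    rwa [ee] at this
  have tCM : ∀ {A : M3} (k : ℕ), Tri (φ * d) A → Tri (φ * d) (c k * A) := by
    intro A k hA
    have := (tc k).mul hA
    rwa [show d * (φ * d) = φ * d by rw [mul_left_comm, dd]] at this
  obtain ⟨K, α, β, hK⟩ := commutator_term (hg 0) (hg 1) hφ' φφ dd tF
  have q1 := quad_code hg (k₁ := 5) (k₂ := 11) (k₃ := 7) (k₄ := 9) (by decide) n
  have q2 := quad_code hg (k₁ := 4) (k₂ := 10) (k₃ := 6) (k₄ := 8) (by decide) n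
  have r1 := q1.2.2
  have r2 := q2.2.1
  change c 5 1 2 + c 11 1 2 = c 7 1 2 + c 9 1 2 at r1
  change c 4 0 1 + c 10 0 1 = c 6 0 1 + c 8 0 1 at r2
  -- `P` is the value of rounds 0 to 3, and `Y * Z * S` that of rounds 12 to 15.
  set F := Y * Z with hF
  set P := F * c 0 * (F * c 1) * (F * c 2) * (F * c 3) with hP
  set S := c 12 * ((F * c 13) * (F * c 14) * (F * c 15)) with hS
  have tP : Tri (φ * d) P := tM (tM (tM (tR 0) (tR 1)) (tR 2)) (tR 3)
  have tS : Tri (φ * d) S := tCM 12 (tM (tM (tR 13) (tR 14)) (tR 15))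
  have eU : val g (bigW fU n) = P * (F * c 4) * (Z * Y * c 5) * (F * c 6) * (F * c 7) *
      (F * c 8) * (F * c 9) * (F * c 10) * (Z * Y * c 11) * (F * S) := by
    simp [bigW, List.range_succ, roundW_eq, fU, pairW, hP, hS, hF, hc, mul_assoc]
    simp [val, hY, hZ]
  have eV : val g (bigW fV n) = P * (F * c 4) * (F * c 5) * (F * c 6) * (Z * Y * c 7) *
      (F * c 8) * (Z * Y * c 9) * (F * c 10) * (F * c 11) * (F * S) := by
    simp [bigW, List.range_succ, roundW_eq, fV, pairW, hP, hS, hF, hc, mul_assoc]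
    simp [val, hY, hZ]
  have two1 := two_commutators (hg 0) (hg 1) hφ' (A := P * (F * c 4))
    (B := c 5 * (F * c 6 * (F * c 7) * (F * c 8) * (F * c 9) * (F * c 10)))
    (C := c 11 * (F * c 12 * ((F * c 13) * (F * c 14) * (F * c 15)))) (tM tP (tR 4))
    (tCM 5 (tM (tM (tM (tM (tR 6) (tR 7)) (tR 8)) (tR 9)) (tR 10)))
    (tCM 11 (tM (tR 12) (tM (tM (tR 13) (tR 14)) (tR 15))))
  have two2 := two_commutators (hg 0) (hg 1) hφ'
    (A := P * (F * c 4) * (F * c 5) * (F * c 6))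
    (B := c 7 * (F * c 8))
    (C := c 9 * (F * c 10 * (F * c 11) * (F * c 12 * ((F * c 13) * (F * c 14) * (F * c 15)))))
    (tM (tM (tM tP (tR 4)) (tR 5)) (tR 6)) (tCM 7 (tR 8))
    (tCM 9 (tM (tM (tR 10) (tR 11)) (tM (tR 12) (tM (tM (tR 13) (tR 14)) (tR 15)))))
  have t5 := hK P (c 4) (c 5)
    (c 6 * (F * c 7 * (F * c 8) * (F * c 9) * (F * c 10) * (F * c 11) * (F * c 12) *
      (F * c 13 * (F * c 14) * (F * c 15)))) tP (tc 4) (tc 5)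
    (tCM 6 (tM (tM (tM (tM (tM (tM (tR 7) (tR 8)) (tR 9)) (tR 10)) (tR 11)) (tR 12))
      (tM (tM (tR 13) (tR 14)) (tR 15))))
  have t7 := hK (P * (F * c 4) * (F * c 5)) (c 6) (c 7)
    (c 8 * (F * c 9 * (F * c 10) * (F * c 11) * (F * c 12) *
      (F * c 13 * (F * c 14) * (F * c 15)))) (tM (tM tP (tR 4)) (tR 5)) (tc 6) (tc 7)
    (tCM 8 (tM (tM (tM (tM (tR 9) (tR 10)) (tR 11)) (tR 12)) (tM (tM (tR 13) (tR 14)) (tR 15))))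
  have t9 := hK (P * (F * c 4) * (F * c 5) * (F * c 6) * (F * c 7)) (c 8) (c 9)
    (c 10 * (F * c 11 * (F * c 12) * (F * c 13 * (F * c 14) * (F * c 15))))
    (tM (tM (tM (tM tP (tR 4)) (tR 5)) (tR 6)) (tR 7)) (tc 8) (tc 9)
    (tCM 10 (tM (tM (tR 11) (tR 12)) (tM (tM (tR 13) (tR 14)) (tR 15))))
  have t11 := hK (P * (F * c 4) * (F * c 5) * (F * c 6) * (F * c 7) * (F * c 8) * (F * c 9))
    (c 10) (c 11) S
    (tM (tM (tM (tM (tM (tM tP (tR 4)) (tR 5)) (tR 6)) (tR 7)) (tR 8)) (tR 9)) (tc 10) (tc 11) tS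
  have hsum : (α * c 4 0 1 + β * c 5 1 2) + (α * c 10 0 1 + β * c 11 1 2) =
      (α * c 6 0 1 + β * c 7 1 2) + (α * c 8 0 1 + β * c 9 1 2) := by
    linear_combination α * r2 + β * r1
  have hZY : Z * Y = F + (Z * Y - F) := by abel
  rw [eU, eV]
  change _ * (Z * Y - F) * _ * (Z * Y - F) * _ = _ at two1
  change _ * (Z * Y - F) * _ * (Z * Y - F) * _ = _ at two2
  generalize Z * Y - F = Δ at *
  rw [hZY]
  clear_value F c
  generalize !![(0 : ℤ), 0, 1; 0, 0, 0; 0, 0, 0] = E at *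
  have hfin := congrArg (fun x : ℤ => K + K + x • E) hsum
  beta_reduce at hfin
  rw [add_smul (α * c 4 0 1 + β * c 5 1 2), add_smul (α * c 6 0 1 + β * c 7 1 2),
    add_add_add_comm, add_add_add_comm K K, ← t5, ← t7, ← t9, ← t11] at hfin
  linear_combination (norm := skip) hfin + two1 - two2
  simp only [hS, mul_add, add_mul, mul_assoc]
  abel

/-! ### Repetitions in the words -/

/-- The letter in position `c` of round `k`. -/
def letterAt (f : ℕ → Bool) (k c : ℕ) : ℕ :=
  2 * (c / 2) + (if bitOf f k (c / 2) then 1 - c % 2 else c % 2)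

theorem letterAt_div (f : ℕ → Bool) (k c : ℕ) : letterAt f k c / 2 = c / 2 := by
  unfold letterAt
  split_ifs <;> omega

/-- The letter in position `p` of `bigW f n`. -/
def posLetter (f : ℕ → Bool) (n p : ℕ) : ℕ :=
  letterAt f (p / (2 * (n + 1))) (p % (2 * (n + 1)))

theorem posLetter_add (f : ℕ → Bool) {n c : ℕ} (k : ℕ) (hc : c < 2 * (n + 1)) :
    posLetter f n (k * (2 * (n + 1)) + c) = letterAt f k c := by
  unfold posLetter
  rw [mul_comm k, Nat.mul_add_div (by omega), Nat.div_eq_of_lt hc, Nat.mul_add_mod,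
    Nat.mod_eq_of_lt hc, add_zero]

theorem flatMap_range_const {F : ℕ → List ℕ} {G : ℕ → ℕ → ℕ} {m : ℕ} (hm : 0 < m)
    (h : ∀ k, F k = (List.range m).map (G k)) (N : ℕ) :
    (List.range N).flatMap F = (List.range (N * m)).map (fun p => G (p / m) (p % m)) := by
  induction N with
  | zero => simp
  | succ N ih =>
    rw [List.range_succ, List.flatMap_append, ih, Nat.succ_mul, List.range_add, List.map_append]
    congr 1
    simp only [List.flatMap_cons, List.flatMap_nil, List.append_nil, h, List.map_map]
    apply List.map_congr_left
    intro c hc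
    have hc := List.mem_range.1 hc
    simp only [Function.comp]
    rw [mul_comm N, Nat.mul_add_div hm, Nat.div_eq_of_lt hc, Nat.mul_add_mod,
      Nat.mod_eq_of_lt hc, add_zero]

theorem roundW_eq_map (f : ℕ → Bool) (n k : ℕ) :
    roundW f n k = (List.range (2 * (n + 1))).map (letterAt f k) := by
  have := flatMap_range_const (F := fun j => pairW (bitOf f k j) j)
    (G := fun j b => 2 * j + (if bitOf f k j then 1 - b else b)) (m := 2) (by norm_num)
    (fun j => by
      simp only [List.range_succ, List.range_zero, pairW]
      split_ifs <;> simp) (n + 1)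
  rw [roundW, this, mul_comm]
  rfl

theorem bigW_eq_map (f : ℕ → Bool) (n : ℕ) :
    bigW f n = (List.range (16 * (2 * (n + 1)))).map (posLetter f n) :=
  flatMap_range_const (by omega) (roundW_eq_map f n) 16

theorem bigW_length (f : ℕ → Bool) (n : ℕ) : (bigW f n).length = 16 * (2 * (n + 1)) := by
  simp [bigW_eq_map]

theorem getElem_of_factor {f : ℕ → Bool} {n : ℕ} {X w Y : List ℕ}
    (h : bigW f n = X ++ w ++ Y) {i : ℕ} (hi : i < w.length) :
    w[i] = posLetter f n (X.length + i) := by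
  have h1 : (bigW f n)[X.length + i]? = some w[i] := by
    rw [h, List.append_assoc, List.getElem?_append_right (by omega)]
    simp [List.getElem?_append_left hi]
  have h2 : X.length + i < (bigW f n).length := by
    rw [h]; simp; omega
  rw [List.getElem?_eq_getElem h2] at h1
  simp only [bigW_eq_map, List.getElem_map, List.getElem_range, Option.some.injEq] at h1
  exact h1.symm

theorem posLetter_eq_div {f : ℕ → Bool} {n p q : ℕ} (h : posLetter f n p = posLetter f n q) :
    p % (2 * (n + 1)) / 2 = q % (2 * (n + 1)) / 2 := by
  have := congrArg (· / 2) h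
  simpa only [posLetter, letterAt_div] using this

/-- Equal letters in different positions are almost a full round apart. -/
theorem far_of_posLetter_eq {f : ℕ → Bool} {n p q : ℕ} (hpq : p < q)
    (h : posLetter f n p = posLetter f n q) : p + (2 * n + 1) ≤ q := by
  have h1 := posLetter_eq_div h
  have hp := Nat.div_add_mod p (2 * (n + 1))
  have hq := Nat.div_add_mod q (2 * (n + 1))
  have hlp := Nat.mod_lt p (show 0 < 2 * (n + 1) by omega)
  have hlq := Nat.mod_lt q (show 0 < 2 * (n + 1) by omega)
  unfold posLetter at h
  generalize p / (2 * (n + 1)) = k at *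
  generalize q / (2 * (n + 1)) = k' at *
  generalize p % (2 * (n + 1)) = c at *
  generalize q % (2 * (n + 1)) = c' at *
  rcases lt_trichotomy k k' with hk | hk | hk
  · have : 2 * (n + 1) * (k + 1) ≤ 2 * (n + 1) * k' := Nat.mul_le_mul_left _ hk
    rw [Nat.mul_add, Nat.mul_one] at this
    omega
  · subst hk
    unfold letterAt at h
    rw [h1] at h
    split_ifs at h <;> omega
  · have : 2 * (n + 1) * (k' + 1) ≤ 2 * (n + 1) * k := Nat.mul_le_mul_left _ hk
    rw [Nat.mul_add, Nat.mul_one] at this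
    omega

theorem nodup_of_short {f : ℕ → Bool} {n : ℕ} {w : List ℕ} (h : w <:+: bigW f n)
    (hw : w.length ≤ 2 * n + 1) : w.Nodup := by
  obtain ⟨X, Y, h⟩ := h
  rw [List.nodup_iff_pairwise_ne, List.pairwise_iff_getElem]
  intro i j hi hj hij e
  rw [getElem_of_factor h.symm hi, getElem_of_factor h.symm hj] at e
  have := far_of_posLetter_eq (by omega) e
  omega

/-- The orientation of a pair can be read off its first letter. -/
theorem bitOf_eq {f : ℕ → Bool} {n k k' j : ℕ} (hj : j ≤ n)
    (h : posLetter f n (k * (2 * (n + 1)) + 2 * j) =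
      posLetter f n (k' * (2 * (n + 1)) + 2 * j)) : bitOf f k j = bitOf f k' j := by
  rw [posLetter_add f k (by omega), posLetter_add f k' (by omega)] at h
  unfold letterAt at h
  rw [Nat.mul_div_cancel_left _ (by norm_num : 0 < 2)] at h
  cases h1 : bitOf f k j <;> cases h2 : bitOf f k' j <;> simp [h1, h2] at h ⊢

/-- Four consecutive code pairs determine the round. -/
theorem round_index_eq {f : ℕ → Bool} {k k' j : ℕ} (hk : k < 16) (hk' : k' < 16)
    (h : ∀ i < 4, bitOf f k (j + i + 1) = bitOf f k' (j + i + 1)) : k = k' := by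
  have hb : ∀ b < 4, k.testBit b = k'.testBit b := by
    intro b hb
    have := h ((b + 3 * (j % 4)) % 4) (Nat.mod_lt _ (by norm_num))
    simp only [bitOf] at this
    rwa [show (j + (b + 3 * (j % 4)) % 4) % 4 = b by omega] at this
  clear h
  revert hb
  interval_cases k <;> interval_cases k' <;> decide

/-- Two consecutive letters determine the position within a round: one letter determines the pair,
and the next one tells whether the pair ends there. -/
theorem mod_eq_of_window {f : ℕ → Bool} {n p q : ℕ} (hn : 1 ≤ n)
    (h0 : posLetter f n p = posLetter f n q)
    (h1 : posLetter f n (p + 1) = posLetter f n (q + 1)) :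
    p % (2 * (n + 1)) = q % (2 * (n + 1)) := by
  have h0 := posLetter_eq_div h0
  have h1 := posLetter_eq_div h1
  rw [Nat.add_mod p 1, Nat.add_mod q 1, Nat.mod_eq_of_lt (show 1 < 2 * (n + 1) by omega)] at h1
  have hlp := Nat.mod_lt p (show 0 < 2 * (n + 1) by omega)
  have hlq := Nat.mod_lt q (show 0 < 2 * (n + 1) by omega)
  generalize p % (2 * (n + 1)) = c at *
  generalize q % (2 * (n + 1)) = c' at *
  have key : ∀ a < 2 * (n + 1), (a + 1 = 2 * (n + 1) ∧ (a + 1) % (2 * (n + 1)) = 0) ∨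
      (a + 1 < 2 * (n + 1) ∧ (a + 1) % (2 * (n + 1)) = a + 1) := by
    intro a ha
    rcases Nat.lt_or_ge (a + 1) (2 * (n + 1)) with h | h
    · exact Or.inr ⟨h, Nat.mod_eq_of_lt h⟩
    · have : a + 1 = 2 * (n + 1) := by omega
      exact Or.inl ⟨this, by rw [this, Nat.mod_self]⟩
  rcases key c hlp with ⟨e1, e2⟩ | ⟨e1, e2⟩ <;> rcases key c' hlq with ⟨e3, e4⟩ | ⟨e3, e4⟩ <;>
    rw [e2, e4] at h1 <;> omega

/-- A factor of length `24` occurs only once. -/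
theorem window_unique {f : ℕ → Bool} {n p q : ℕ} (hn : 12 ≤ n)
    (hp : p + 24 ≤ 16 * (2 * (n + 1))) (hq : q + 24 ≤ 16 * (2 * (n + 1)))
    (h : ∀ i < 24, posLetter f n (p + i) = posLetter f n (q + i)) : p = q := by
  have hmod := mod_eq_of_window (by omega) (h 0 (by norm_num)) (h 1 (by norm_num))
  simp only [add_zero] at hmod
  have ep := Nat.div_add_mod' p (2 * (n + 1))
  have eq := Nat.div_add_mod' q (2 * (n + 1))
  have hlp := Nat.mod_lt p (show 0 < 2 * (n + 1) by omega)
  rw [← hmod] at eq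
  generalize p / (2 * (n + 1)) = k at *
  generalize q / (2 * (n + 1)) = k' at *
  generalize p % (2 * (n + 1)) = c at *
  have bound : ∀ {a : ℕ}, a * (2 * (n + 1)) < 16 * (2 * (n + 1)) → a < 16 :=
    fun ha => Nat.lt_of_mul_lt_mul_right ha
  rcases Nat.lt_or_ge (c + 12) (2 * (n + 1)) with hc | hc
  · -- With `j = (c + 1) / 2`, pairs `j + 1, …, j + 4` of the current round begin in the window.
    have : k = k' := by
      refine round_index_eq (f := f) (j := (c + 1) / 2) (bound (by omega)) (bound (by omega)) ?_
      intro i hi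
      apply bitOf_eq (n := n) (by omega)
      have := h (2 * ((c + 1) / 2 + i + 1) - c) (by omega)
      rw [← ep, ← eq] at this
      convert this using 2 <;> omega
    rw [← ep, ← eq, this]
  · -- Pairs `1, …, 4` of the next round begin in the window.
    have hk1 : (k + 1) * (2 * (n + 1)) = k * (2 * (n + 1)) + 2 * (n + 1) := by ring
    have hk2 : (k' + 1) * (2 * (n + 1)) = k' * (2 * (n + 1)) + 2 * (n + 1) := by ring
    have : k + 1 = k' + 1 := by
      refine round_index_eq (f := f) (j := 0) (bound (by omega)) (bound (by omega)) ?_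
      intro i hi
      apply bitOf_eq (n := n) (by omega)
      have := h (2 * (n + 1) - c + 2 * (0 + i + 1)) (by omega)
      rw [← ep, ← eq] at this
      convert this using 2 <;> omega
    rw [← ep, ← eq, Nat.succ.inj this]

/-- A word that occurs as a factor in two different places is short. -/
theorem repeated_short {f : ℕ → Bool} {n : ℕ} (hn : 12 ≤ n) {X X' Y Y' w : List ℕ}
    (h : bigW f n = X ++ w ++ Y) (h' : bigW f n = X' ++ w ++ Y')
    (hne : X.length ≠ X'.length) : w.length < 24 := by
  by_contra hw
  have l1 := congrArg List.length h
  have l2 := congrArg List.length h'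
  rw [bigW_length] at l1 l2
  simp only [List.length_append] at l1 l2
  refine hne (window_unique hn (by omega) (by omega) (f := f) ?_)
  intro i hi
  rw [← getElem_of_factor h (by omega : i < w.length), getElem_of_factor h' (by omega)]

theorem bigW_ne (n : ℕ) : bigW fU n ≠ bigW fV n := by
  intro h
  rw [bigW_eq_map, bigW_eq_map] at h
  have := List.map_inj_left.1 h (5 * (2 * (n + 1)) + 0) (List.mem_range.2 (by omega))
  rw [posLetter_add _ _ (by omega), posLetter_add _ _ (by omega)] at this
  simp [letterAt, bitOf, fU, fV] at this

/-- If a substitution instance of a word `s`, short relative to `n`, is a factor of `bigW f n`,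
then `s` has repetition-free gaps: the letters of a gap are repeated, so their images are short,
and short factors of `bigW f n` have no repeated letters. -/
theorem gapsNodup_of_instance {f : ℕ → Bool} {n : ℕ} {s : List ℕ} {ψ : ℕ → List ℕ}
    (hn : 12 ≤ n) (hsn : 24 * s.length ≤ 2 * n + 1) (hψ : ∀ a, ψ a ≠ [])
    (h : s.flatMap ψ <:+: bigW f n) : GapsNodup s := by
  intro r hr hr2
  have hshort : ∀ a ∈ r, (ψ a).length ≤ 24 := by
    intro a ha
    have ha2 := hr2 a ha
    obtain ⟨s₁, s₂, rfl⟩ := List.append_of_mem (List.count_pos_iff.1 (by omega : 0 < s.count a))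
    obtain ⟨X, Y, hXY⟩ := h
    have hpos : 0 < (ψ a).length := List.length_pos_iff.2 (hψ a)
    rw [List.count_append, List.count_cons_self] at ha2
    have : a ∈ s₁ ∨ a ∈ s₂ := by
      simp only [← List.count_pos_iff]
      omega
    refine le_of_lt ?_
    rcases this with hm | hm
    · obtain ⟨u, v, rfl⟩ := List.append_of_mem hm
      refine repeated_short hn (X := X ++ u.flatMap ψ)
        (Y := v.flatMap ψ ++ ψ a ++ s₂.flatMap ψ ++ Y)
        (X' := X ++ u.flatMap ψ ++ ψ a ++ v.flatMap ψ) (Y' := s₂.flatMap ψ ++ Y)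
        (by rw [← hXY]; simp) (by rw [← hXY]; simp) ?_
      simp only [List.length_append]; omega
    · obtain ⟨u, v, rfl⟩ := List.append_of_mem hm
      refine repeated_short hn (X := X ++ s₁.flatMap ψ)
        (Y := u.flatMap ψ ++ ψ a ++ v.flatMap ψ ++ Y)
        (X' := X ++ s₁.flatMap ψ ++ ψ a ++ u.flatMap ψ) (Y' := v.flatMap ψ ++ Y)
        (by rw [← hXY]; simp) (by rw [← hXY]; simp) ?_
      simp only [List.length_append]; omega
  have hlen : (r.flatMap ψ).length ≤ 24 * r.length := by
    clear hr hr2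
    induction r with
    | nil => simp
    | cons a r ih =>
      have h1 := hshort a (by simp)
      have h2 := ih (fun b hb => hshort b (by simp [hb]))
      simp only [List.flatMap_cons, List.length_append, List.length_cons]
      omega
  have hrl := hr.length_le
  have hinf : r.flatMap ψ <:+: bigW f n := by
    obtain ⟨s₁, s₂, rfl⟩ := hr
    refine List.IsInfix.trans ⟨s₁.flatMap ψ, s₂.flatMap ψ, by simp⟩ h
  have hnd := nodup_of_short hinf (by omega)
  clear hr hr2 hshort hlen hrl hinf
  induction r with
  | nil => exact List.nodup_nil
  | cons a r ih =>
    rw [List.flatMap_cons, List.nodup_append] at hnd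
    refine List.nodup_cons.2 ⟨fun ha => ?_, ih hnd.2.1⟩
    obtain ⟨b, hb⟩ := List.exists_mem_of_ne_nil _ (hψ a)
    exact hnd.2.2 b hb b (List.mem_flatMap.2 ⟨a, ha, hb⟩) rfl

/-! ### The separating semigroup -/

/-- The congruence on the free semigroup that collapses all words that are not factors of `U`. -/
def factorCon (U : List ℕ) : Con (FreeSemigroup ℕ) where
  r a b := a = b ∨ (¬ wl a <:+: U ∧ ¬ wl b <:+: U)
  iseqv := by
    refine ⟨fun a => Or.inl rfl, ?_, ?_⟩
    · rintro a b (rfl | ⟨h1, h2⟩)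
      · exact Or.inl rfl
      · exact Or.inr ⟨h2, h1⟩
    · rintro a b c (rfl | ⟨h1, h2⟩) (rfl | ⟨h3, h4⟩)
      · exact Or.inl rfl
      · exact Or.inr ⟨h3, h4⟩
      · exact Or.inr ⟨h1, h2⟩
      · exact Or.inr ⟨h1, h4⟩
  mul' := by
    have left : ∀ a b : FreeSemigroup ℕ, ¬ wl a <:+: U → ¬ wl (a * b) <:+: U := by
      intro a b h h'
      rw [wl_mul] at h'
      exact h ((List.prefix_append _ _).isInfix.trans h')
    have right : ∀ a b : FreeSemigroup ℕ, ¬ wl b <:+: U → ¬ wl (a * b) <:+: U := by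
      intro a b h h'
      rw [wl_mul] at h'
      exact h ((List.suffix_append _ _).isInfix.trans h')
    rintro a b c d (rfl | ⟨h1, h2⟩) (rfl | ⟨h3, h4⟩)
    · exact Or.inl rfl
    · exact Or.inr ⟨right _ _ h3, right _ _ h4⟩
    · exact Or.inr ⟨left _ _ h1, left _ _ h2⟩
    · exact Or.inr ⟨left _ _ h1, left _ _ h2⟩

/-- A substitution into a quotient of the free semigroup comes from a substitution of words. -/
theorem exists_lift (c : Con (FreeSemigroup ℕ)) (φ : FreeSemigroup ℕ →ₙ* c.Quotient) :
    ∃ ψ : FreeSemigroup ℕ →ₙ* FreeSemigroup ℕ, ∀ w, φ w = (ψ w : c.Quotient) := by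
  have hsurj : ∀ q : c.Quotient, ∃ w : FreeSemigroup ℕ, (w : c.Quotient) = q :=
    fun q => Quotient.exists_rep q
  choose rep hrep using hsurj
  refine ⟨FreeSemigroup.lift (fun a => rep (φ (FreeSemigroup.of a))), fun w => ?_⟩
  induction w using FreeSemigroup.recOnMul with
  | ih1 x => rw [FreeSemigroup.lift_of, hrep]
  | ih2 x y hx hy => rw [map_mul, map_mul, hx, hy, Con.coe_mul]

/-- `UT₃(ℤ)` is nonfinitely based: no finite set of identities holding in `UT₃(ℤ)`
implies all identities holding in `UT₃(ℤ)`. -/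
theorem UT3Z_int_nonfinitely_based :
    ¬ ∃ Sgm : Finset (FreeSemigroup ℕ × FreeSemigroup ℕ),
      (∀ e ∈ Sgm, SatisfiesId ↥UT3Z e) ∧
      (∀ e, SatisfiesId ↥UT3Z e → FollowsFrom (↑Sgm) e) := by
  rintro ⟨Sgm, hS, hall⟩
  -- `n` is so large that `24 * s.length ≤ 2 * n + 1` for every side `s` of an identity in `Sgm`.
  set L := Sgm.sup (fun e => (wl e.1).length + (wl e.2).length) with hL
  set n := 12 * L + 12 with hn
  have toFree : ∀ f, ∃ w : FreeSemigroup ℕ, wl w = bigW f n := by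
    intro f
    have hlen := bigW_length f n
    cases h : bigW f n with
    | nil => rw [h, List.length_nil] at hlen; omega
    | cons a l => exact ⟨⟨a, l⟩, rfl⟩
  obtain ⟨u, hu⟩ := toFree fU
  obtain ⟨v, hv⟩ := toFree fV
  have hid : SatisfiesId ↥UT3Z (u, v) := by
    rw [satisfiesId_iff]
    dsimp only
    rw [hu, hv]
    exact holds_big n
  have hiso : ∀ s t : FreeSemigroup ℕ, (wl s).length ≤ L → HoldsL (wl s) (wl t) →
      ∀ ψ : FreeSemigroup ℕ →ₙ* FreeSemigroup ℕ, wl (ψ s) <:+: bigW fU n → s = t := by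
    intro s t hs hst ψ hψ
    rw [hom_flatMap] at hψ
    exact wl_injective ((gapsNodup_of_instance (by omega) (by omega)
      (fun a => List.cons_ne_nil _ _) hψ).isoterm hst)
  have hmodel : ∀ e ∈ (↑Sgm : Set (FreeSemigroup ℕ × FreeSemigroup ℕ)),
      SatisfiesId (factorCon (bigW fU n)).Quotient e := by
    intro e he φ
    obtain ⟨ψ, hψ⟩ := exists_lift _ φ
    have hle : (wl e.1).length + (wl e.2).length ≤ L :=
      Finset.le_sup (f := fun e => (wl e.1).length + (wl e.2).length) he
    have hh := (satisfiesId_iff e).1 (hS e he)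
    rw [hψ, hψ, Con.eq]
    by_cases h1 : wl (ψ e.1) <:+: bigW fU n
    · exact Or.inl (congrArg ψ (hiso _ _ (by omega) hh ψ h1))
    · by_cases h2 : wl (ψ e.2) <:+: bigW fU n
      · exact Or.inl (congrArg ψ (hiso _ _ (by omega) hh.symm ψ h2).symm)
      · exact Or.inr ⟨h1, h2⟩
  have huv := hall _ hid _ hmodel (factorCon (bigW fU n)).mkMulHom
  have huv' : (factorCon (bigW fU n)) u v := (Con.eq _).1 huv
  rcases huv' with rfl | ⟨h1, -⟩
  · exact bigW_ne n (hu.symm.trans hv)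
  · exact h1 (by rw [hu])
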